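/- Suppose c > 0 and 0 < γ < h. For each sufficiently small α > 0 let Z(α) ≥ 0 be a solution of the steady-state robust-queueing fixed-point equation Z(α) = sup_{u ≥ 0} { ρ(α)u − u/F̄(α·Z(α)) + b·√(ρ(α)·u·I_w(λ(α)u)/μ) }. Then lim_{α↓0} α^{1−γ/k}·Z(α) = (c·k!/F^{(k)}(0))^{1/k}. In particular the limit is independent of b and of I_w, and depends on F only through F^{(k)}(0). -/

import Mathlib

open Filter Set Topology
open Asymptotics

/-! The supremum defining `z = Z(α)` is finite only if its linear part has nonpositive slope, and
then completing the square bounds it by a constant over the absolute slope. With `x = α z`,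
`δ = ρ - 1` and `y = 1 / F̄(x) - 1 = F(x) / (1 - F(x))` this reads `δ ≤ y` and `x (y - δ) = O(α)`.
Since `y ∼ a x ^ p`, the first relation makes `x` at least of order `δ ^ (1 / p)`, so the second
gives `y - δ = O(α / δ ^ (1 / p))`. This is `o(δ)` as soon as `α = o(δ ^ (1 + 1 / p))`, which for
`δ ∼ c α ^ γ` is the condition `γ < p / (p + 1)`. Hence `a x ^ p ∼ δ`, whatever `b` and `I_w`. -/

lemma tendsto_rpow_nhdsGT_zero {r : ℝ} (hr : 0 < r) :
    Tendsto (fun x : ℝ => x ^ r) (𝓝[>] 0) (𝓝 0) := by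
  simpa [hr.ne'] using
    (Real.continuousAt_rpow_const 0 r (.inr hr.le)).tendsto.mono_left nhdsWithin_le_nhds

lemma isLittleO_rpow_rpow_nhdsGT_zero {a b : ℝ} (hab : a < b) :
    (fun x : ℝ => x ^ b) =o[𝓝[>] 0] fun x => x ^ a := by
  refine isLittleO_of_tendsto' ?_ ((tendsto_rpow_nhdsGT_zero (sub_pos.2 hab)).congr' ?_) <;>
    filter_upwards [self_mem_nhdsWithin] with x (hx : 0 < x)
  · exact fun h0 => absurd h0 (Real.rpow_pos_of_pos hx a).ne'
  · exact Real.rpow_sub hx b a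

lemma isEquivalent_of_iteratedDerivWithin_eq_zero {f : ℝ → ℝ} {s : Set ℝ} {x₀ : ℝ} {n : ℕ}
    (hs : Convex ℝ s) (hx₀ : x₀ ∈ s) (hf : ContDiffOn ℝ n f s)
    (hlt : ∀ j < n, iteratedDerivWithin j f s x₀ = 0) (hn : iteratedDerivWithin n f s x₀ ≠ 0) :
    f ~[𝓝[s] x₀] fun x => iteratedDerivWithin n f s x₀ / n.factorial * (x - x₀) ^ n := by
  have htaylor : taylorWithinEval f n s x₀ =
      fun x => iteratedDerivWithin n f s x₀ / n.factorial * (x - x₀) ^ n := by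
    ext x
    rw [taylor_within_apply, Finset.sum_range_succ, Finset.sum_eq_zero, zero_add, smul_eq_mul]
    · ring
    · exact fun j hj => by rw [hlt j (Finset.mem_range.1 hj), smul_zero]
  rw [← htaylor]
  refine (taylor_isLittleO hs hx₀ hf).trans_isBigO ?_
  rw [htaylor]
  exact isBigO_self_const_mul (div_ne_zero hn (by positivity)) _ _

lemma isEquivalent_div_one_sub {ι 𝕜 : Type*} [NormedField 𝕜] {l : Filter ι} {u : ι → 𝕜}
    (hu : Tendsto u l (𝓝 0)) : (fun i => u i / (1 - u i)) ~[l] u := by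
  have h : (fun i => 1 - u i) ~[l] fun _ => 1 :=
    (isEquivalent_const_iff_tendsto one_ne_zero).2 <| by simpa using hu.const_sub 1
  simpa [Pi.div_def] using! (IsEquivalent.refl (u := u)).div h

lemma monotoneOn_div_one_sub {𝕜 : Type*} [Field 𝕜] [LinearOrder 𝕜] [IsStrictOrderedRing 𝕜] :
    MonotoneOn (fun t : 𝕜 => t / (1 - t)) (Iio 1) := by
  intro s hs t ht hst
  rw [mem_Iio] at hs ht
  rw [div_le_div_iff₀ (sub_pos.2 hs) (sub_pos.2 ht)]
  linarith

lemma pos_of_monotoneOn_of_eventually_pos {X Y : Type*} [LinearOrder X] [TopologicalSpace X]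
    [OrderTopology X] [DenselyOrdered X] [Preorder Y] [Zero Y] {G : X → Y} {a x : X}
    (hG : MonotoneOn G (Ioi a)) (hpos : ∀ᶠ y in 𝓝[>] a, 0 < G y) (hx : a < x) : 0 < G x := by
  have := nhdsGT_neBot_of_exists_gt ⟨x, hx⟩
  obtain ⟨y, hy, hay, hyx⟩ := (hpos.and (Ioo_mem_nhdsGT hx)).exists
  exact hy.trans_le (hG hay hx hyx.le)

lemma tendsto_zero_of_mul_sub_le {ι : Type*} {l : Filter ι} {G : ℝ → ℝ} {x δ e : ι → ℝ}
    (hG : MonotoneOn G (Ioi 0)) (hGpos : ∀ y, 0 < y → 0 < G y) (hx : ∀ᶠ i in l, 0 ≤ x i)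
    (hbal : ∀ᶠ i in l, x i * (G (x i) - δ i) ≤ e i)
    (hδ : Tendsto δ l (𝓝 0)) (he : Tendsto e l (𝓝 0)) : Tendsto x l (𝓝 0) := by
  refine tendsto_order.2 ⟨fun a ha => hx.mono fun _ => ha.trans_le, fun ε hε => ?_⟩
  have hGε := hGpos ε hε
  filter_upwards [hbal, hδ.eventually_lt_const (half_pos hGε),
    he.eventually_lt_const (mul_pos hε (half_pos hGε))] with i hbal hδ he
  by_contra! hεx
  have hmono : G ε ≤ G (x i) := hG hε (hε.trans_le hεx) hεx
  refine he.not_ge (le_trans ?_ hbal)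
  exact mul_le_mul hεx (by linarith) (half_pos hGε).le (hε.le.trans hεx)

lemma isEquivalent_of_mul_sub_le {ι : Type*} {l : Filter ι} {x y δ e : ι → ℝ} {p : ℝ}
    (hp : 0 < p) (hx : ∀ᶠ i in l, 0 ≤ x i) (hδ : ∀ᶠ i in l, 0 < δ i)
    (hy : y =O[l] fun i => x i ^ p) (hle : ∀ᶠ i in l, δ i ≤ y i)
    (hbal : ∀ᶠ i in l, x i * (y i - δ i) ≤ e i) (he : e =o[l] fun i => δ i ^ (1 + 1 / p)) :
    y ~[l] δ := by
  have hδx : (fun i => δ i ^ (1 / p)) =O[l] x := by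
    have h : δ =O[l] fun i => x i ^ p := by
      refine .trans (.of_bound' ?_) hy
      filter_upwards [hδ, hle] with i hδ hle
      rwa [Real.norm_of_nonneg hδ.le, Real.norm_of_nonneg (hδ.le.trans hle)]
    refine (h.rpow (one_div_pos.2 hp).le (hx.mono fun i hi => by positivity)).congr' .rfl ?_
    filter_upwards [hx] with i hi
    rw [one_div, Real.rpow_rpow_inv hi hp.ne']
  have hgap : (fun i => x i * (y i - δ i)) =O[l] e := by
    refine .of_bound' ?_
    filter_upwards [hx, hle, hbal] with i hx hle hbal
    rw [Real.norm_of_nonneg (mul_nonneg hx (sub_nonneg.2 hle))]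
    exact hbal.trans (le_abs_self _)
  have h : (fun i => δ i ^ (1 / p) * (y i - δ i)) =o[l] fun i => δ i ^ (1 / p) * δ i := by
    refine ((hδx.mul (isBigO_refl _ l)).trans hgap).trans_isLittleO (he.congr' .rfl ?_)
    filter_upwards [hδ] with i hδ
    rw [Real.rpow_add hδ, Real.rpow_one, mul_comm]
  refine ((isBigO_refl (fun i => (δ i ^ (1 / p))⁻¹) l).mul_isLittleO h).congr' ?_ ?_ <;>
    filter_upwards [hδ] with i hδ <;>
    exact inv_mul_cancel_left₀ (Real.rpow_pos_of_pos hδ _).ne' _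

lemma isEquivalent_rpow_of_eventually_nonneg {ι : Type*} {l : Filter ι} {u v : ι → ℝ}
    (hv : 0 ≤ᶠ[l] v) (h : u ~[l] v) (r : ℝ) : (fun i => u i ^ r) ~[l] fun i => v i ^ r := by
  have habs : (fun i => |v i|) =ᶠ[l] v := hv.mono fun _ => abs_of_nonneg
  exact ((h.trans_eventuallyEq habs.symm).rpow (fun i => abs_nonneg (v i))).trans_eventuallyEq
    (habs.fun_comp (· ^ r))

lemma isEquivalent_rpow_inv_of_rpow {ι : Type*} {l : Filter ι} {x v : ι → ℝ} {p : ℝ}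
    (hp : p ≠ 0) (hx : 0 ≤ᶠ[l] x) (h : (fun i => x i ^ p) ~[l] v) :
    x ~[l] fun i => v i ^ p⁻¹ := by
  have hv : 0 ≤ᶠ[l] v := h.symm.eventually_nonneg (hx.mono fun _ hi => Real.rpow_nonneg hi p)
  refine .trans (EventuallyEq.isEquivalent ?_) (isEquivalent_rpow_of_eventually_nonneg hv h p⁻¹)
  exact hx.mono fun _ hi => (Real.rpow_rpow_inv hi hp).symm

lemma isEquivalent_rpow_of_isEquivalent_const_mul_rpow {δ : ℝ → ℝ} {c γ : ℝ} (hc : 0 ≤ c)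
    (h : δ ~[𝓝[>] 0] fun t => c * t ^ γ) (r : ℝ) :
    (fun t => δ t ^ r) ~[𝓝[>] 0] fun t => c ^ r * t ^ (γ * r) := by
  have hpos : ∀ᶠ t : ℝ in 𝓝[>] 0, 0 < t := self_mem_nhdsWithin
  refine (isEquivalent_rpow_of_eventually_nonneg ?_ h r).trans_eventuallyEq ?_
  · exact hpos.mono fun t ht => mul_nonneg hc (Real.rpow_nonneg ht.le γ)
  · filter_upwards [hpos] with t ht
    rw [Real.mul_rpow hc (Real.rpow_nonneg ht.le γ), Real.rpow_mul ht.le]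

lemma isLUB_image_of_coe_eq_iSup {X : Type*} {f : X → ℝ} {s : Set X} {z : ℝ}
    (h : (z : EReal) = ⨆ x : s, (f x : EReal)) : IsLUB (f '' s) z := by
  refine ⟨?_, fun w hw => ?_⟩
  · rintro _ ⟨x, hx, rfl⟩
    exact EReal.coe_le_coe_iff.1 (h ▸ le_iSup (fun x : s => (f x : EReal)) ⟨x, hx⟩)
  · rw [← EReal.coe_le_coe_iff, h]
    exact iSup_le fun x => EReal.coe_le_coe_iff.2 (hw (mem_image_of_mem f x.2))

lemma mul_sqrt_sub_le {A d u : ℝ} (b : ℝ) (hA : 0 ≤ A) (hd : 0 < d) (hu : 0 ≤ u) :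
    b * √(A * u) - d * u ≤ b ^ 2 * A / (4 * d) := by
  rw [le_div_iff₀ (by positivity), Real.sqrt_mul hA]
  calc (b * (√A * √u) - d * u) * (4 * d) = b ^ 2 * √A ^ 2 - (b * √A - 2 * d * √u) ^ 2 := by
        linear_combination 4 * d ^ 2 * Real.sq_sqrt hu
    _ ≤ b ^ 2 * √A ^ 2 := sub_le_self _ (sq_nonneg _)
    _ = b ^ 2 * A := by rw [Real.sq_sqrt hA]

/-- The robust-queueing objective at horizon `u` for traffic intensity `r`; the arrival rate is
`r * μ`, and `s` stands for the tail probability `F̄(α z)`, which enters only through `u / s`. -/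
noncomputable def rqObjective (Iw : ℝ → ℝ) (μ b r s u : ℝ) : ℝ :=
  r * u - u / s + b * √(r * u * Iw (r * μ * u) / μ)

lemma le_one_div_of_bddAbove_rqObjective {Iw : ℝ → ℝ} {μ b r s : ℝ} (hb : 0 ≤ b)
    (h : BddAbove (rqObjective Iw μ b r s '' Ici 0)) : r ≤ 1 / s := by
  by_contra! hrs
  obtain ⟨M, hM⟩ := h
  have hlin : Tendsto (fun u : ℝ => (r - 1 / s) * u) atTop atTop :=
    tendsto_id.const_mul_atTop (sub_pos.2 hrs)
  obtain ⟨u, hMu, hu⟩ := ((hlin.eventually_gt_atTop M).and (eventually_ge_atTop 0)).exists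
  refine (hM (mem_image_of_mem _ hu)).not_gt (hMu.trans_le ?_)
  calc (r - 1 / s) * u = r * u - u / s := by ring
    _ ≤ rqObjective Iw μ b r s u := le_add_of_nonneg_right (by positivity)

lemma mul_sub_le_of_isLUB_rqObjective {Iw : ℝ → ℝ} {μ b r s z C : ℝ} (hμ : 0 < μ)
    (hb : 0 ≤ b) (hr : 0 ≤ r) (hI : ∀ t, 0 ≤ t → Iw t ∈ Icc 0 C)
    (h : IsLUB (rqObjective Iw μ b r s '' Ici 0) z) :
    z * (1 / s - r) ≤ b ^ 2 * (r * C / μ) / 4 := by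
  have hC : 0 ≤ C := (hI 0 le_rfl).1.trans (hI 0 le_rfl).2
  rcases (le_one_div_of_bddAbove_rqObjective hb ⟨z, h.1⟩).eq_or_lt with hrs | hrs
  · rw [sub_eq_zero.2 hrs.symm, mul_zero]
    positivity
  rw [← le_div_iff₀ (sub_pos.2 hrs), div_div]
  refine h.2 ?_
  rintro _ ⟨u, hu : 0 ≤ u, rfl⟩
  calc rqObjective Iw μ b r s u
      ≤ r * u - u / s + b * √(r * u * C / μ) := by
        unfold rqObjective
        gcongr
        exact (hI _ (by positivity)).2
    _ = b * √(r * C / μ * u) - (1 / s - r) * u := by ring_nf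
    _ ≤ b ^ 2 * (r * C / μ) / (4 * (1 / s - r)) :=
      mul_sqrt_sub_le b (by positivity) (sub_pos.2 hrs) hu

/-- `z` solves the steady-state robust-queueing fixed-point equation at traffic intensity `ρ`, time
scale `α` and tail function `1 - F`. Being a least upper bound forces the supremum to be finite,
unlike an equation with the real-valued `⨆`. -/
def IsRQWorkload (F Iw : ℝ → ℝ) (μ b ρ α z : ℝ) : Prop :=
  IsLUB (rqObjective Iw μ b ρ (1 - F (α * z)) '' Ici 0) z

lemma IsRQWorkload.nonneg {F Iw : ℝ → ℝ} {μ b ρ α z : ℝ} (h : IsRQWorkload F Iw μ b ρ α z) :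
    0 ≤ z :=
  h.1 ⟨0, self_mem_Ici, by simp [rqObjective]⟩

lemma IsRQWorkload.le_div_one_sub {F Iw : ℝ → ℝ} {μ b ρ α z : ℝ} (hb : 0 ≤ b)
    (hF : F (α * z) < 1) (h : IsRQWorkload F Iw μ b ρ α z) :
    ρ - 1 ≤ F (α * z) / (1 - F (α * z)) := by
  have hs : 1 - F (α * z) ≠ 0 := (sub_pos.2 hF).ne'
  calc ρ - 1 ≤ 1 / (1 - F (α * z)) - 1 :=
        sub_le_sub_right (le_one_div_of_bddAbove_rqObjective hb ⟨z, h.1⟩) 1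
    _ = F (α * z) / (1 - F (α * z)) := by field_simp; ring

lemma IsRQWorkload.mul_sub_le {F Iw : ℝ → ℝ} {μ b ρ α z C : ℝ} (hμ : 0 < μ) (hb : 0 ≤ b)
    (hρ : 0 ≤ ρ) (hα : 0 ≤ α) (hI : ∀ t, 0 ≤ t → Iw t ∈ Icc 0 C) (hF : F (α * z) < 1)
    (h : IsRQWorkload F Iw μ b ρ α z) :
    α * z * (F (α * z) / (1 - F (α * z)) - (ρ - 1)) ≤ b ^ 2 * (ρ * C / μ) / 4 * α := by
  have hs : 1 - F (α * z) ≠ 0 := (sub_pos.2 hF).ne'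
  calc α * z * (F (α * z) / (1 - F (α * z)) - (ρ - 1))
      = z * (1 / (1 - F (α * z)) - ρ) * α := by field_simp; ring
    _ ≤ b ^ 2 * (ρ * C / μ) / 4 * α := by
        gcongr
        exact mul_sub_le_of_isLUB_rqObjective hμ hb hρ hI h

lemma tendsto_mul_of_isRQWorkload {ι : Type*} {l : Filter ι} {F Iw : ℝ → ℝ}
    {α ρ Z : ι → ℝ} {μ b C : ℝ} (hF : MonotoneOn F (Ici 0)) (hF0 : F 0 = 0)
    (hF1 : ∀ y, 0 ≤ y → F y < 1) (hFpos : ∀ y, 0 < y → 0 < F y)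
    (hI : ∀ t, 0 ≤ t → Iw t ∈ Icc 0 C) (hμ : 0 < μ) (hb : 0 ≤ b)
    (hα : Tendsto α l (𝓝[>] 0)) (hρ : Tendsto ρ l (𝓝[>] 1))
    (hZ : ∀ᶠ i in l, IsRQWorkload F Iw μ b (ρ i) (α i) (Z i)) :
    Tendsto (fun i => α i * Z i) l (𝓝[>] 0) := by
  obtain ⟨hα0, hαpos⟩ := tendsto_nhdsWithin_iff.1 hα
  obtain ⟨hρ1, hρgt⟩ := tendsto_nhdsWithin_iff.1 hρ
  have hx : ∀ᶠ i in l, 0 ≤ α i * Z i := by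
    filter_upwards [hαpos, hZ] with i hα hZ
    exact mul_nonneg (le_of_lt hα) hZ.nonneg
  refine tendsto_nhdsWithin_iff.2 ⟨?_, ?_⟩
  · have hG : MonotoneOn (fun y => F y / (1 - F y)) (Ioi 0) :=
      monotoneOn_div_one_sub.comp (hF.mono Ioi_subset_Ici_self) fun y hy => hF1 y (le_of_lt hy)
    have hGpos : ∀ y, 0 < y → 0 < F y / (1 - F y) := fun y hy =>
      div_pos (hFpos y hy) (sub_pos.2 (hF1 y hy.le))
    refine tendsto_zero_of_mul_sub_le (δ := fun i => ρ i - 1)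
      (e := fun i => b ^ 2 * (ρ i * C / μ) / 4 * α i) hG hGpos hx ?_ ?_ ?_
    · filter_upwards [hαpos, hρgt, hx, hZ] with i hα hρ hx hZ
      exact hZ.mul_sub_le hμ hb (zero_le_one.trans (le_of_lt hρ)) (le_of_lt hα) hI (hF1 _ hx)
    · simpa using hρ1.sub_const 1
    · simpa using ((((hρ1.mul_const C).div_const μ).const_mul (b ^ 2)).div_const 4).mul hα0
  · filter_upwards [hρgt, hx, hZ] with i (hρ : 1 < ρ i) hx hZ
    refine hx.lt_of_ne fun h0 => ?_
    have := hZ.le_div_one_sub hb (hF1 _ hx)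
    rw [← h0, hF0, zero_div] at this
    linarith

lemma isEquivalent_sub_one_of_isRQWorkload {ι : Type*} {l : Filter ι} {F Iw : ℝ → ℝ}
    {α ρ Z : ι → ℝ} {p μ b C : ℝ} (hp : 0 < p) (hF1 : ∀ y, 0 ≤ y → F y < 1)
    (hI : ∀ t, 0 ≤ t → Iw t ∈ Icc 0 C) (hμ : 0 < μ) (hb : 0 ≤ b) (hα : ∀ᶠ i in l, 0 < α i)
    (hρ : Tendsto ρ l (𝓝[>] 1)) (hαρ : α =o[l] fun i => (ρ i - 1) ^ (1 + 1 / p))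
    (hZ : ∀ᶠ i in l, IsRQWorkload F Iw μ b (ρ i) (α i) (Z i))
    (hodds : (fun i => F (α i * Z i) / (1 - F (α i * Z i))) =O[l] fun i => (α i * Z i) ^ p) :
    (fun i => F (α i * Z i) / (1 - F (α i * Z i))) ~[l] fun i => ρ i - 1 := by
  obtain ⟨hρ1, hρgt⟩ := tendsto_nhdsWithin_iff.1 hρ
  have hx : ∀ᶠ i in l, 0 ≤ α i * Z i := by
    filter_upwards [hα, hZ] with i hα hZ
    exact mul_nonneg hα.le hZ.nonneg
  have hbdd : (fun i => b ^ 2 * (ρ i * C / μ) / 4) =O[l] fun _ => (1 : ℝ) :=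
    ((((hρ1.mul_const C).div_const μ).const_mul (b ^ 2)).div_const 4).isBigO_one ℝ
  refine isEquivalent_of_mul_sub_le (x := fun i => α i * Z i)
    (e := fun i => b ^ 2 * (ρ i * C / μ) / 4 * α i) hp hx (hρgt.mono fun i hi => sub_pos.2 hi)
    hodds ?_ ?_ ((hbdd.mul (isBigO_refl α l)).trans_isLittleO (by simpa using hαρ))
  · filter_upwards [hx, hZ] with i hx hZ
    exact hZ.le_div_one_sub hb (hF1 _ hx)
  · filter_upwards [hα, hρgt, hx, hZ] with i hα hρ hx hZ
    exact hZ.mul_sub_le hμ hb (zero_le_one.trans (le_of_lt hρ)) hα.le hI (hF1 _ hx)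

lemma isEquivalent_mul_of_isRQWorkload {ι : Type*} {l : Filter ι} {F Iw : ℝ → ℝ}
    {α ρ Z : ι → ℝ} {a p μ b C : ℝ} (hp : 0 < p) (ha : 0 < a) (hF : MonotoneOn F (Ici 0))
    (hF0 : F 0 = 0) (hF1 : ∀ y, 0 ≤ y → F y < 1) (hFa : F ~[𝓝[>] 0] fun y => a * y ^ p)
    (hI : ∀ t, 0 ≤ t → Iw t ∈ Icc 0 C) (hμ : 0 < μ) (hb : 0 ≤ b)
    (hα : Tendsto α l (𝓝[>] 0)) (hρ : Tendsto ρ l (𝓝[>] 1))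
    (hαρ : α =o[l] fun i => (ρ i - 1) ^ (1 + 1 / p))
    (hZ : ∀ᶠ i in l, IsRQWorkload F Iw μ b (ρ i) (α i) (Z i)) :
    (fun i => α i * Z i) ~[l] fun i => ((ρ i - 1) / a) ^ (1 / p) := by
  have hFpos : ∀ y, 0 < y → 0 < F y := fun y hy =>
    pos_of_monotoneOn_of_eventually_pos (hF.mono Ioi_subset_Ici_self) (hFa.eventually_pos <|
      eventually_mem_nhdsWithin.mono fun t ht => mul_pos ha (Real.rpow_pos_of_pos ht p)) hy
  have hFlim : Tendsto F (𝓝[>] 0) (𝓝 0) :=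
    hFa.symm.tendsto_nhds <| by simpa using (tendsto_rpow_nhdsGT_zero hp).const_mul a
  have hx : Tendsto (fun i => α i * Z i) l (𝓝[>] 0) :=
    tendsto_mul_of_isRQWorkload hF hF0 hF1 hFpos hI hμ hb hα hρ hZ
  have hodds : (fun i => F (α i * Z i) / (1 - F (α i * Z i))) ~[l]
      fun i => a * (α i * Z i) ^ p :=
    ((isEquivalent_div_one_sub hFlim).trans hFa).comp_tendsto hx
  have hbal : (fun i => a * (α i * Z i) ^ p) ~[l] fun i => ρ i - 1 :=
    hodds.symm.trans <| isEquivalent_sub_one_of_isRQWorkload hp hF1 hI hμ hb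
      (hα.eventually self_mem_nhdsWithin) hρ hαρ hZ
      (hodds.isBigO.trans (isBigO_const_mul_self _ _ _))
  rw [one_div]
  refine isEquivalent_rpow_inv_of_rpow hp.ne' ?_ ?_
  · exact (hx.eventually self_mem_nhdsWithin).mono fun _ => le_of_lt
  · simpa [Pi.div_def, ha.ne'] using! hbal.div (IsEquivalent.refl (u := fun _ => a))

theorem rq_heavy_traffic_overloaded_general {F Iw ρ Z : ℝ → ℝ} {a p c γ μ b C : ℝ}
    (hp : 0 < p) (ha : 0 < a) (hc : 0 < c) (hγ : 0 < γ) (hγp : γ < p / (p + 1))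
    (hF : MonotoneOn F (Ici 0)) (hF0 : F 0 = 0) (hF1 : ∀ y, 0 ≤ y → F y < 1)
    (hFa : F ~[𝓝[>] 0] fun y => a * y ^ p) (hI : ∀ t, 0 ≤ t → Iw t ∈ Icc 0 C)
    (hμ : 0 < μ) (hb : 0 ≤ b) (hρ : (fun α => ρ α - 1) ~[𝓝[>] 0] fun α => c * α ^ γ)
    (hZ : ∀ᶠ α in 𝓝[>] 0, IsRQWorkload F Iw μ b (ρ α) α (Z α)) :
    Tendsto (fun α => α ^ (1 - γ / p) * Z α) (𝓝[>] 0) (𝓝 ((c / a) ^ (1 / p))) := by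
  have hpos : ∀ᶠ α : ℝ in 𝓝[>] 0, 0 < α := self_mem_nhdsWithin
  have hρ1 : Tendsto ρ (𝓝[>] 0) (𝓝[>] 1) := by
    refine tendsto_nhdsWithin_iff.2 ⟨?_, ?_⟩
    · rw [← tendsto_sub_nhds_zero_iff]
      refine hρ.symm.tendsto_nhds ?_
      simpa using (tendsto_rpow_nhdsGT_zero hγ).const_mul c
    · exact (hρ.eventually_pos (hpos.mono fun α hα => by positivity)).mono fun _ => sub_pos.1
  have hαρ : (fun α => α) =o[𝓝[>] 0] fun α => (ρ α - 1) ^ (1 + 1 / p) := by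
    have hexp : γ * (1 + 1 / p) < 1 := by
      rw [lt_div_iff₀ (by positivity)] at hγp
      rw [one_add_div hp.ne', ← mul_div_assoc, div_lt_one hp]
      exact hγp
    have hscale := isEquivalent_rpow_of_isEquivalent_const_mul_rpow hc.le hρ (1 + 1 / p)
    refine .trans_isBigO ?_ ((isBigO_self_const_mul (by positivity) _ _).trans hscale.symm.isBigO)
    simpa using isLittleO_rpow_rpow_nhdsGT_zero hexp
  have hx := isEquivalent_mul_of_isRQWorkload hp ha hF hF0 hF1 hFa hI hμ hb tendsto_id hρ1 hαρ hZ
  have hρa : (fun α => (ρ α - 1) / a) ~[𝓝[>] 0] fun α => c / a * α ^ γ := by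
    simpa [Pi.div_def, div_mul_eq_mul_div] using! hρ.div (IsEquivalent.refl (u := fun _ => a))
  have hlim := (hx.trans (isEquivalent_rpow_of_isEquivalent_const_mul_rpow
    (by positivity) hρa (1 / p))).div (IsEquivalent.refl (u := fun α => α ^ (γ * (1 / p))))
  refine (hlim.trans_eventuallyEq ?_).tendsto_const.congr' ?_ <;>
    filter_upwards [hpos] with α hα
  · exact mul_div_cancel_right₀ _ (Real.rpow_pos_of_pos hα _).ne'
  · rw [Real.rpow_sub hα, Real.rpow_one, Pi.div_apply, mul_one_div, id, div_mul_eq_mul_div]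

/-- heavy-traffic limit of the RQ fixed point in the overloaded regime
(`c > 0`, `0 < γ < h = k/(k+1)`).  Then `α^{1-γ/k} Z(α) → (c k! / F^{(k)}(0))^{1/k}`;
in particular the limit is independent of `b` and of `I_w`, and depends on `F` only
through `F^{(k)}(0)`. -/
theorem rq_heavy_traffic_overloaded
    (k : ℕ) (hk : 1 ≤ k)
    (F : ℝ → ℝ)
    (hF_mono : Monotone F)
    (hF_zero : ∀ x ≤ (0 : ℝ), F x = 0)
    (hF_range : ∀ x, 0 ≤ x → 0 ≤ F x ∧ F x < 1)
    (hF_lim : Tendsto F atTop (𝓝 1))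
    (hF_smooth : ContDiffOn ℝ k F (Set.Ici 0))
    (hF_derivs : ∀ j < k, iteratedDerivWithin j F (Set.Ici 0) 0 = 0)
    (hF_k : 0 < iteratedDerivWithin k F (Set.Ici 0) 0)
    (Iw : ℝ → ℝ) (hIw_cont : Continuous Iw)
    (hIw_nonneg : ∀ t, 0 ≤ t → 0 ≤ Iw t)
    (hIw_bdd : ∃ C : ℝ, ∀ t, 0 ≤ t → Iw t ≤ C)
    (cx2 : ℝ) (hcx2 : 0 < cx2)
    (hIw_lim : Tendsto Iw atTop (𝓝 cx2))
    (μ b γ c : ℝ) (hμ : 0 < μ) (hb : 0 < b) (hγ : 0 < γ)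
    (hc : 0 < c) (hγh : γ < (k : ℝ) / (k + 1))
    (Z : ℝ → ℝ)
    (hZ : ∀ᶠ α in 𝓝[>] (0 : ℝ),
      0 ≤ Z α ∧
      (Z α : EReal) = ⨆ u : {u : ℝ // 0 ≤ u},
        (((1 + c * α ^ γ) * (u : ℝ) - (u : ℝ) / (1 - F (α * Z α))
          + b * Real.sqrt ((1 + c * α ^ γ) * (u : ℝ)
              * Iw ((1 + c * α ^ γ) * μ * (u : ℝ)) / μ) : ℝ) : EReal)) :
    Tendsto (fun α : ℝ => α ^ (1 - γ / (k : ℝ)) * Z α)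
      (𝓝[>] (0 : ℝ))
      (𝓝 ((c * (Nat.factorial k) / iteratedDerivWithin k F (Set.Ici 0) 0)
        ^ ((1 : ℝ) / (k : ℝ)))) := by
  obtain ⟨C, hC⟩ := hIw_bdd
  have hFk : F ~[𝓝[>] 0] fun y =>
      iteratedDerivWithin k F (Ici 0) 0 / k.factorial * y ^ (k : ℝ) := by
    simpa using (isEquivalent_of_iteratedDerivWithin_eq_zero (convex_Ici 0) self_mem_Ici
      hF_smooth hF_derivs hF_k.ne').mono (nhdsWithin_mono 0 Ioi_subset_Ici_self)
  rw [← div_div_eq_mul_div]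
  exact rq_heavy_traffic_overloaded_general (ρ := fun α => 1 + c * α ^ γ) (by positivity)
    (by positivity) hc hγ hγh (hF_mono.monotoneOn _) (hF_zero 0 le_rfl)
    (fun y hy => (hF_range y hy).2) hFk (fun t ht => ⟨hIw_nonneg t ht, hC t ht⟩) hμ hb.le
    (by simpa using IsEquivalent.refl) (hZ.mono fun α hα => isLUB_image_of_coe_eq_iSup hα.2)
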